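/- There exists an absolute constant C > 0 such that for every integer N ≥ 2, every pair of integers a, q with 1 ≤ a ≤ q and gcd(a,q) = 1, and every real β, we have |Ŵ(a/q + β)| ≤ C·( N^{1/2}/q^{1/2} + (q·log q)^{1/2}·(1 + |β|·N) ). -/

import Mathlib

/-- `e(x) = e^{2πix}`. -/
noncomputable def eu (x : ℝ) : ℂ := Complex.exp (2 * Real.pi * Complex.I * x)

/-- The Fourier transform `Ŵ(γ) = ∑_n W(n) e(nγ)` of the weight
`W(n) = 2m/√N` if `n = m²≤ N` (`m ≥ 1`), `W(n) = 0` otherwise. -/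
noncomputable def hatW (N : ℕ) (γ : ℝ) : ℂ :=
  ∑ m ∈ Finset.Icc 1 (Nat.sqrt N), ((2 * (m : ℝ) / Real.sqrt N : ℝ) : ℂ) * eu ((m : ℝ) ^ 2 * γ)

/-! Write `Ŵ(a/q + β) = ∑ w(m) f(m)` with the slowly varying weight `w(m) = (2m/√N) e(βm²)` and the
`q`-periodic phase `f(m) = e(am²/q)`, and split `f` into its mean `μ` and the oscillation `f - μ`.
The mean is a normalised quadratic Gauss sum, so `|μ| ≪ q^{-1/2}`, and `∑ |w(m)| ≪ √N`: this gives
the first term. The partial sums of `f - μ` depend only on their length modulo `q`, so they are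
controlled by incomplete Gauss sums of length less than `q`; Weyl differencing turns the square of
such a sum into geometric sums `∑_y e(2ady/q)`, and since `d ↦ 2ad` is at most two-to-one modulo
`q`, their total is `≪ q ∑_{r ≤ q} 1/r ≪ q log q`. Abel summation against `w`, whose total variation
is `≪ 1 + |β|N`, gives the second term.
-/

open Finset

section FiniteSums

lemma sum_comp_le_nsmul_sum {ι κ M : Type*} [DecidableEq κ] [AddCommMonoid M] [PartialOrder M]
    [IsOrderedAddMonoid M] {s : Finset ι} {t : Finset κ} {g : ι → κ} (hg : ∀ i ∈ s, g i ∈ t)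
    {w : κ → M} (hw : ∀ j ∈ t, 0 ≤ w j) {k : ℕ} (hk : ∀ j ∈ t, #{i ∈ s | g i = j} ≤ k) :
    ∑ i ∈ s, w (g i) ≤ k • ∑ j ∈ t, w j := by
  rw [← sum_fiberwise_of_maps_to hg, smul_sum]
  refine sum_le_sum fun j hj => ?_
  calc ∑ i ∈ s with g i = j, w (g i) = #{i ∈ s | g i = j} • w j :=
        sum_eq_card_nsmul fun i hi => congrArg w (mem_filter.1 hi).2
    _ ≤ k • w j := nsmul_le_nsmul_left (hw j hj) (hk j hj)

lemma sum_range_natCast_zmod {M : Type*} [AddCommMonoid M] {q : ℕ} [NeZero q] (f : ZMod q → M) :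
    ∑ m ∈ range q, f m = ∑ x, f x :=
  sum_nbij' (fun m => (m : ZMod q)) ZMod.val (by simp) (fun x _ => by simpa using ZMod.val_lt x)
    (fun m hm => ZMod.val_cast_of_lt (by simpa using hm)) (by simp) (by simp)

lemma sum_range_natCast_zmod_eq_sum_range_mod {M : Type*} [AddCommMonoid M] {q : ℕ} [NeZero q]
    {f : ZMod q → M} (hf : ∑ x, f x = 0) (n : ℕ) :
    ∑ m ∈ range n, f m = ∑ m ∈ range (n % q), f m := by
  have shift (r k : ℕ) : ∑ m ∈ range (r + q * k), f m = ∑ m ∈ range r, f m := by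
    induction k with
    | zero => simp
    | succ k ih =>
      rw [show r + q * (k + 1) = q + (r + q * k) by ring, sum_range_add, sum_range_natCast_zmod,
        hf, zero_add, ← ih]
      simp
  conv_lhs => rw [← Nat.mod_add_div n q]
  exact shift _ _

lemma norm_sum_range_succ_smul_le {R E : Type*} [SeminormedRing R] [SeminormedAddCommGroup E]
    [Module R E] [IsBoundedSMul R E] (g : ℕ → R) {f : ℕ → E} {B : ℝ}
    (hf : ∀ n, ‖∑ m ∈ range n, f m‖ ≤ B) (n : ℕ) :
    ‖∑ m ∈ range (n + 1), g m • f m‖ ≤ (‖g n‖ + ∑ m ∈ range n, ‖g (m + 1) - g m‖) * B := by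
  rw [sum_range_by_parts, Nat.add_sub_cancel, add_mul, sum_mul]
  refine (norm_sub_le _ _).trans (add_le_add ?_ ?_)
  · exact (norm_smul_le _ _).trans (by gcongr; exact hf _)
  · refine (norm_sum_le _ _).trans (sum_le_sum fun m _ => ?_)
    exact (norm_smul_le _ _).trans (by gcongr; exact hf _)

lemma norm_sum_range_sq_add_sum_norm_sq {𝕜 E : Type*} [RCLike 𝕜] [SeminormedAddCommGroup E]
    [InnerProductSpace 𝕜 E] (z : ℕ → E) (n : ℕ) :
    ‖∑ x ∈ range n, z x‖ ^ 2 + ∑ x ∈ range n, ‖z x‖ ^ 2 =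
      2 * RCLike.re (∑ x ∈ range n, inner 𝕜 (∑ y ∈ range (x + 1), z y) (z x)) := by
  induction n with
  | zero => simp
  | succ n ih =>
    simp only [sum_range_succ _ n, map_add, mul_add, ← ih]
    rw [norm_add_sq (𝕜 := 𝕜), inner_add_left, map_add, inner_self_eq_norm_sq]
    ring

lemma norm_sum_range_sq_le_two_mul_sum_norm_sum_inner {𝕜 E : Type*} [RCLike 𝕜]
    [SeminormedAddCommGroup E] [InnerProductSpace 𝕜 E] (z : ℕ → E) (n : ℕ) :
    ‖∑ x ∈ range n, z x‖ ^ 2 ≤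
      2 * ∑ d ∈ range n, ‖∑ y ∈ range (n - d), inner 𝕜 (z y) (z (y + d))‖ := by
  have regroup : ∑ x ∈ range n, inner 𝕜 (∑ y ∈ range (x + 1), z y) (z x) =
      ∑ d ∈ range n, ∑ y ∈ range (n - d), inner 𝕜 (z y) (z (y + d)) := by
    rw [← sum_range_diag_flip n fun d y => inner 𝕜 (z y) (z (y + d))]
    refine sum_congr rfl fun x _ => ?_
    rw [sum_inner, ← sum_range_reflect]
    refine sum_congr rfl fun d hd => ?_
    rw [Nat.add_sub_cancel, Nat.sub_add_cancel (Nat.lt_succ_iff.1 (mem_range.1 hd))]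
  calc ‖∑ x ∈ range n, z x‖ ^ 2
      ≤ ‖∑ x ∈ range n, z x‖ ^ 2 + ∑ x ∈ range n, ‖z x‖ ^ 2 :=
        le_add_of_nonneg_right (by positivity)
    _ = 2 * RCLike.re (∑ d ∈ range n, ∑ y ∈ range (n - d), inner 𝕜 (z y) (z (y + d))) := by
        rw [norm_sum_range_sq_add_sum_norm_sq (𝕜 := 𝕜), regroup]
    _ ≤ _ := by
        gcongr
        exact (RCLike.re_le_norm _).trans (norm_sum_le _ _)

lemma norm_geom_sum_mul_norm_sub_one_le {K : Type*} [NormedDivisionRing K] {ζ : K} (hζ : ‖ζ‖ ≤ 1)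
    (k : ℕ) : ‖∑ y ∈ range k, ζ ^ y‖ * ‖ζ - 1‖ ≤ 2 := by
  calc ‖∑ y ∈ range k, ζ ^ y‖ * ‖ζ - 1‖ = ‖ζ ^ k - 1‖ := by rw [← norm_mul, geom_sum_mul]
    _ ≤ ‖ζ‖ ^ k + ‖(1 : K)‖ := (norm_sub_le _ _).trans_eq (by rw [norm_pow])
    _ ≤ 2 := by
        have := pow_le_one₀ (norm_nonneg ζ) hζ (n := k)
        rw [norm_one]
        linarith

end FiniteSums

section ComplexExponential

lemma eu_eq_fourierChar (x : ℝ) : eu x = Real.fourierChar x := by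
  rw [eu, Real.fourierChar_apply]
  push_cast
  ring_nf

lemma norm_eu (x : ℝ) : ‖eu x‖ = 1 := by
  rw [eu_eq_fourierChar, Circle.norm_coe]

lemma eu_add (x y : ℝ) : eu (x + y) = eu x * eu y := by
  simp only [eu_eq_fourierChar, AddChar.map_add_eq_mul, Circle.coe_mul]

lemma norm_eu_sub_one (x : ℝ) : ‖eu x - 1‖ = 2 * |Real.sin (Real.pi * x)| := by
  have h := Complex.norm_exp_I_mul_ofReal_sub_one (2 * (Real.pi * x))
  rw [mul_div_cancel_left₀ _ two_ne_zero, norm_mul, Real.norm_ofNat, Real.norm_eq_abs] at h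
  rw [← h, eu]
  push_cast
  ring_nf

lemma norm_eu_sub_one_le (x : ℝ) : ‖eu x - 1‖ ≤ 2 * Real.pi * |x| := by
  calc ‖eu x - 1‖ = 2 * |Real.sin (Real.pi * x)| := norm_eu_sub_one x
    _ ≤ 2 * |Real.pi * x| := mul_le_mul_of_nonneg_left Real.abs_sin_le_abs zero_le_two
    _ = 2 * Real.pi * |x| := by rw [abs_mul, abs_of_pos Real.pi_pos, mul_assoc]

lemma four_mul_abs_le_norm_eu_sub_one {x : ℝ} (hx : |x| ≤ 1 / 2) : 4 * |x| ≤ ‖eu x - 1‖ := by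
  have abs_pi_mul : |Real.pi * x| = Real.pi * |x| := by rw [abs_mul, abs_of_pos Real.pi_pos]
  have jordan := Real.mul_abs_le_abs_sin (x := Real.pi * x)
    (by rw [abs_pi_mul]; linarith [mul_le_mul_of_nonneg_left hx Real.pi_pos.le])
  calc 4 * |x| = 2 * (2 / Real.pi * |Real.pi * x|) := by rw [abs_pi_mul]; field_simp; ring
    _ ≤ ‖eu x - 1‖ := by rw [norm_eu_sub_one]; gcongr

end ComplexExponential

section QuadraticPhases

variable {R : Type*} [CommRing R] (ψ : AddChar R ℂ)

lemma inner_addChar_mul_sq [Finite R] (a x d : R) :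
    inner ℂ (ψ (a * x ^ 2)) (ψ (a * (x + d) ^ 2)) = ψ (a * d ^ 2) * ψ (x * (2 * a * d)) := by
  rw [RCLike.inner_apply, ← AddChar.map_neg_eq_conj, ← AddChar.map_add_eq_mul,
    ← AddChar.map_add_eq_mul]
  ring_nf

lemma norm_sum_range_addChar_mul_sq_sq_le [Finite R] (a : R) (n : ℕ) :
    ‖∑ m ∈ range n, ψ (a * m ^ 2)‖ ^ 2 ≤
      2 * ∑ d ∈ range n, ‖∑ y ∈ range (n - d), ψ (2 * a * d) ^ y‖ := by
  refine (norm_sum_range_sq_le_two_mul_sum_norm_sum_inner (𝕜 := ℂ) _ n).trans_eq ?_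
  congr! 2 with d
  simp_rw [Nat.cast_add, inner_addChar_mul_sq, ← nsmul_eq_mul _ (2 * a * (d : R)),
    AddChar.map_nsmul_eq_pow, ← mul_sum]
  rw [norm_mul, AddChar.norm_apply, one_mul]

lemma norm_sum_addChar_mul_sq_sq_le [Fintype R] [DecidableEq R] {ψ : AddChar R ℂ}
    (hψ : ψ.IsPrimitive) (a : R) :
    ‖∑ x, ψ (a * x ^ 2)‖ ^ 2 ≤ Fintype.card R * #{d : R | 2 * a * d = 0} := by
  have expand : inner ℂ (∑ x, ψ (a * x ^ 2)) (∑ x, ψ (a * x ^ 2)) =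
      ∑ d, ψ (a * d ^ 2) * ∑ x, ψ (x * (2 * a * d)) := by
    simp_rw [mul_sum, ← inner_addChar_mul_sq]
    rw [sum_comm, sum_inner]
    refine sum_congr rfl fun x _ => ?_
    rw [inner_sum]
    exact (Equiv.sum_comp (Equiv.addLeft x) fun y => inner ℂ (ψ (a * x ^ 2)) (ψ (a * y ^ 2))).symm
  calc ‖∑ x, ψ (a * x ^ 2)‖ ^ 2
      = ‖inner ℂ (∑ x, ψ (a * x ^ 2)) (∑ x, ψ (a * x ^ 2))‖ := by
        rw [← inner_self_re_eq_norm, inner_self_eq_norm_sq]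
    _ ≤ ∑ d, ‖ψ (a * d ^ 2) * ∑ x, ψ (x * (2 * a * d))‖ := by
        rw [expand]
        exact norm_sum_le _ _
    _ = ∑ d, if 2 * a * d = 0 then (Fintype.card R : ℝ) else 0 := by
        refine sum_congr rfl fun d _ => ?_
        rw [norm_mul, AddChar.norm_apply, one_mul, AddChar.sum_mulShift _ hψ]
        split_ifs <;> simp
    _ = Fintype.card R * #{d : R | 2 * a * d = 0} := by
        rw [← sum_filter, sum_const, nsmul_eq_mul, mul_comm]

end QuadraticPhases

section GaussSums

lemma card_filter_nsmul_eq_le {G : Type*} [AddCommGroup G] [IsAddCyclic G] [Fintype G]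
    [DecidableEq G] {n : ℕ} (hn : 0 < n) (c : G) : #{x : G | n • x = c} ≤ n := by
  rcases ({x : G | n • x = c} : Finset G).eq_empty_or_nonempty with hempty | ⟨x₀, hx₀⟩
  · simp [hempty]
  have hx₀ : n • x₀ = c := (mem_filter.1 hx₀).2
  refine le_trans ?_ (IsAddCyclic.card_nsmul_eq_zero_le (α := G) hn)
  refine card_le_card_of_injOn (· - x₀) (fun x hx => ?_) sub_left_injective.injOn
  have hx : n • x = c := by simpa using hx
  simp [smul_sub, hx, hx₀]

variable {q : ℕ} [NeZero q]

lemma card_filter_two_mul_mul_eq_le {a : ZMod q} (ha : IsUnit a) (c : ZMod q) :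
    #{d : ZMod q | 2 * a * d = c} ≤ 2 := by
  obtain ⟨u, rfl⟩ := ha
  refine le_trans (card_le_card fun d hd => ?_) (card_filter_nsmul_eq_le two_pos (↑u⁻¹ * c))
  have hd : 2 * u * d = c := by simpa using hd
  simp [← hd, mul_left_comm, mul_assoc]

lemma card_filter_natAbs_valMinAbs_eq_le (r : ℕ) :
    #{t : ZMod q | t.valMinAbs.natAbs = r} ≤ 2 := by
  refine le_trans (card_le_card fun t ht => ?_) (card_le_two (a := (r : ZMod q)) (b := -r))
  have ht : t.valMinAbs.natAbs = r := by simpa using ht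
  rw [← ht, ZMod.natCast_natAbs_valMinAbs]
  split_ifs <;> simp

lemma sum_inv_one_add_natAbs_valMinAbs_le :
    ∑ t : ZMod q, (1 + t.valMinAbs.natAbs : ℝ)⁻¹ ≤ 2 * (1 + Real.log q) := by
  have hq : q / 2 + 1 ≤ q := Nat.div_lt_self (NeZero.pos q) one_lt_two
  calc ∑ t : ZMod q, (1 + t.valMinAbs.natAbs : ℝ)⁻¹
      ≤ 2 • ∑ r ∈ range (q / 2 + 1), (1 + r : ℝ)⁻¹ :=
        sum_comp_le_nsmul_sum (g := fun t : ZMod q => t.valMinAbs.natAbs)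
          (w := fun r : ℕ => (1 + r : ℝ)⁻¹)
          (fun t _ => mem_range.2 (Nat.lt_succ_of_le t.natAbs_valMinAbs_le))
          (fun r _ => by positivity) (fun r _ => card_filter_natAbs_valMinAbs_eq_le r)
    _ = 2 * harmonic (q / 2 + 1) := by simp [harmonic, add_comm]
    _ ≤ 2 * (1 + Real.log (q / 2 + 1 : ℕ)) := by
        gcongr
        exact harmonic_le_one_add_log _
    _ ≤ 2 * (1 + Real.log q) := by gcongr

lemma stdAddChar_intCast_eq_eu (j : ℤ) : ZMod.stdAddChar (j : ZMod q) = eu (j / q) := by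
  rw [ZMod.stdAddChar_coe, eu]
  push_cast
  ring_nf

lemma four_mul_natAbs_valMinAbs_div_le_norm_stdAddChar_sub_one (t : ZMod q) :
    4 * (t.valMinAbs.natAbs / q : ℝ) ≤ ‖ZMod.stdAddChar t - 1‖ := by
  have hq : (0 : ℝ) < q := mod_cast NeZero.pos q
  have habs : |(t.valMinAbs / q : ℝ)| = t.valMinAbs.natAbs / q := by
    rw [abs_div, Nat.abs_cast, Nat.cast_natAbs, Int.cast_abs]
  have hhalf : |(t.valMinAbs / q : ℝ)| ≤ 1 / 2 := by
    have : (t.valMinAbs.natAbs : ℝ) ≤ q / 2 :=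
      (Nat.cast_le.2 t.natAbs_valMinAbs_le).trans Nat.cast_div_le
    rw [habs, div_le_iff₀ hq]
    linarith
  calc 4 * (t.valMinAbs.natAbs / q : ℝ) ≤ ‖eu (t.valMinAbs / q) - 1‖ := by
        rw [← habs]
        exact four_mul_abs_le_norm_eu_sub_one hhalf
    _ = ‖ZMod.stdAddChar t - 1‖ := by rw [← stdAddChar_intCast_eq_eu, ZMod.coe_valMinAbs]

-- For `t ≠ 0` the geometric series gives `q / (2|t|)`; weakening `2|t|` to `1 + |t|` makes the
-- same formula cover the trivial bound `q` at `t = 0`.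
lemma norm_sum_range_stdAddChar_pow_le (t : ZMod q) {k : ℕ} (hk : k ≤ q) :
    ‖∑ y ∈ range k, ZMod.stdAddChar t ^ y‖ ≤ q * (1 + t.valMinAbs.natAbs : ℝ)⁻¹ := by
  have hq : (0 : ℝ) < q := mod_cast NeZero.pos q
  rcases eq_or_ne t 0 with rfl | ht
  · simpa using hk
  have hv : (1 : ℝ) ≤ t.valMinAbs.natAbs := by
    rw [Nat.one_le_cast, Nat.one_le_iff_ne_zero, Int.natAbs_ne_zero]
    exact (ZMod.valMinAbs_eq_zero t).not.2 ht
  set v := (t.valMinAbs.natAbs : ℝ)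
  have hgeom : ‖∑ y ∈ range k, ZMod.stdAddChar t ^ y‖ * (4 * (v / q)) ≤ 2 :=
    le_trans (by gcongr; exact four_mul_natAbs_valMinAbs_div_le_norm_stdAddChar_sub_one t)
      (norm_geom_sum_mul_norm_sub_one_le (AddChar.norm_apply _ t).le k)
  calc ‖∑ y ∈ range k, ZMod.stdAddChar t ^ y‖
      = ‖∑ y ∈ range k, ZMod.stdAddChar t ^ y‖ * (4 * (v / q)) * (q * (4 * v)⁻¹) := by field_simp
    _ ≤ 2 * (q * (4 * v)⁻¹) := by gcongr
    _ = q * (2 * v)⁻¹ := by field_simp; norm_num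
    _ ≤ q * (1 + v)⁻¹ := by gcongr; linarith

lemma sum_range_comp_two_mul_mul_le {a : ZMod q} (ha : IsUnit a) {w : ZMod q → ℝ}
    (hw : ∀ t, 0 ≤ w t) {n : ℕ} (hn : n ≤ q) :
    ∑ d ∈ range n, w (2 * a * d) ≤ 2 * ∑ t, w t := by
  calc ∑ d ∈ range n, w (2 * a * d) ≤ ∑ d ∈ range q, w (2 * a * d) :=
        sum_le_sum_of_subset_of_nonneg (range_subset_range.2 hn) fun _ _ _ => hw _
    _ = ∑ d : ZMod q, w (2 * a * d) := sum_range_natCast_zmod fun d => w (2 * a * d)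
    _ ≤ 2 • ∑ t, w t :=
        sum_comp_le_nsmul_sum (fun _ _ => mem_univ _) (fun t _ => hw t)
          fun t _ => card_filter_two_mul_mul_eq_le ha t
    _ = 2 * ∑ t, w t := by rw [nsmul_eq_mul, Nat.cast_ofNat]

lemma sum_norm_sum_range_stdAddChar_pow_le {a : ZMod q} (ha : IsUnit a) {n : ℕ} (hn : n ≤ q) :
    ∑ d ∈ range n, ‖∑ y ∈ range (n - d), ZMod.stdAddChar (2 * a * (d : ZMod q)) ^ y‖ ≤
      4 * (q * (1 + Real.log q)) := by
  calc _ ≤ ∑ d ∈ range n, q * (1 + (2 * a * (d : ZMod q)).valMinAbs.natAbs : ℝ)⁻¹ :=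
        sum_le_sum fun d _ => norm_sum_range_stdAddChar_pow_le _ ((Nat.sub_le n d).trans hn)
    _ ≤ 2 * ∑ t : ZMod q, q * (1 + t.valMinAbs.natAbs : ℝ)⁻¹ :=
        sum_range_comp_two_mul_mul_le ha
          (w := fun t => q * (1 + t.valMinAbs.natAbs : ℝ)⁻¹) (fun _ => by positivity) hn
    _ ≤ 2 * (q * (2 * (1 + Real.log q))) := by
        rw [← mul_sum]
        gcongr
        exact sum_inv_one_add_natAbs_valMinAbs_le
    _ = 4 * (q * (1 + Real.log q)) := by ring

lemma norm_sum_range_stdAddChar_mul_sq_sq_le {a : ZMod q} (ha : IsUnit a) {n : ℕ} (hn : n ≤ q) :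
    ‖∑ m ∈ range n, ZMod.stdAddChar (a * (m : ZMod q) ^ 2)‖ ^ 2 ≤ 8 * (q * (1 + Real.log q)) := by
  have weyl := norm_sum_range_addChar_mul_sq_sq_le (ZMod.stdAddChar (N := q)) a n
  linarith [sum_norm_sum_range_stdAddChar_pow_le ha hn]

/-- The normalised quadratic Gauss sum `q⁻¹ ∑ₓ e(ax²/q)`, which is the mean value of the periodic
phase `m ↦ e(am²/q)`. -/
noncomputable def gaussMean (a : ZMod q) : ℂ := (∑ x, ZMod.stdAddChar (a * x ^ 2)) / q

lemma sum_stdAddChar_mul_sq_sub_gaussMean (a : ZMod q) :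
    ∑ x, (ZMod.stdAddChar (a * x ^ 2) - gaussMean a) = 0 := by
  rw [sum_sub_distrib, sum_const, card_univ, ZMod.card, nsmul_eq_mul, gaussMean,
    mul_div_cancel₀ _ (NeZero.ne _), sub_self]

lemma norm_sum_stdAddChar_mul_sq_sq_le {a : ZMod q} (ha : IsUnit a) :
    ‖∑ x, ZMod.stdAddChar (a * x ^ 2)‖ ^ 2 ≤ 2 * q := by
  refine (norm_sum_addChar_mul_sq_sq_le (ZMod.isPrimitive_stdAddChar q) a).trans ?_
  rw [ZMod.card, mul_comm]
  gcongr
  exact mod_cast card_filter_two_mul_mul_eq_le ha 0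

lemma norm_gaussMean_le {a : ZMod q} (ha : IsUnit a) : ‖gaussMean a‖ ≤ 2 / Real.sqrt q := by
  have hq : (0 : ℝ) < q := mod_cast NeZero.pos q
  rw [gaussMean, norm_div, Complex.norm_natCast, div_le_div_iff₀ hq (Real.sqrt_pos.2 hq)]
  refine le_of_sq_le_sq ?_ (by positivity)
  rw [mul_pow, Real.sq_sqrt hq.le]
  nlinarith [norm_sum_stdAddChar_mul_sq_sq_le ha]

lemma norm_sum_range_stdAddChar_mul_sq_sub_gaussMean_le {a : ZMod q} (ha : IsUnit a) (n : ℕ) :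
    ‖∑ m ∈ range n, (ZMod.stdAddChar (a * (m : ZMod q) ^ 2) - gaussMean a)‖ ≤
      8 * Real.sqrt (q * Real.log q) := by
  rw [sum_range_natCast_zmod_eq_sum_range_mod (sum_stdAddChar_mul_sq_sub_gaussMean a)]
  obtain rfl | hq2 : q = 1 ∨ 2 ≤ q := by have := NeZero.pos q; omega
  · simp [Nat.mod_one]
  have hr : n % q ≤ q := (Nat.mod_lt n (NeZero.pos q)).le
  set r := n % q
  have hlog : 1 ≤ 2 * Real.log q := by
    linarith [Real.log_two_gt_d9, Real.log_le_log two_pos (Nat.ofNat_le_cast.2 hq2 : (2 : ℝ) ≤ q)]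
  have hqlog : q ≤ 2 * (q * Real.log q) := by nlinarith
  set L := Real.sqrt (q * Real.log q)
  have hL : L ^ 2 = q * Real.log q := Real.sq_sqrt (by linarith)
  have incomplete : ‖∑ m ∈ range r, ZMod.stdAddChar (a * (m : ZMod q) ^ 2)‖ ≤ 5 * L := by
    refine le_of_sq_le_sq ((norm_sum_range_stdAddChar_mul_sq_sq_le ha hr).trans ?_) (by positivity)
    linarith
  have mean : ‖r * gaussMean a‖ ≤ 3 * L := by
    calc ‖r * gaussMean a‖ ≤ q * (2 / Real.sqrt q) := by
          rw [norm_mul, Complex.norm_natCast]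
          gcongr
          exact norm_gaussMean_le ha
      _ = 2 * Real.sqrt q := by rw [mul_div_left_comm, Real.div_sqrt]
      _ ≤ 3 * L := by
          refine le_of_sq_le_sq ?_ (by positivity)
          rw [mul_pow, Real.sq_sqrt (Nat.cast_nonneg q)]
          linarith
  rw [sum_sub_distrib, sum_const, card_range, nsmul_eq_mul]
  exact (norm_sub_le _ _).trans (by linarith)

end GaussSums

section Weight

/-- The summand of `hatW N β` at `m`, that is the weight `2m/√N` of `W` at `m²` twisted by the
slowly varying phase `e(βm²)`. -/
noncomputable def twistedWeight (N : ℕ) (β : ℝ) (m : ℕ) : ℂ :=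
  ((2 * (m : ℝ) / Real.sqrt N : ℝ) : ℂ) * eu ((m : ℝ) ^ 2 * β)

variable {N : ℕ} (β : ℝ) {m : ℕ}

lemma twistedWeight_zero : twistedWeight N β 0 = 0 := by
  simp [twistedWeight]

lemma hatW_add (α : ℝ) :
    hatW N (α + β) =
      ∑ m ∈ range (Nat.sqrt N + 1), twistedWeight N β m * eu ((m : ℝ) ^ 2 * α) := by
  rw [hatW, range_eq_Ico, sum_eq_sum_Ico_succ_bot (Nat.succ_pos _), twistedWeight_zero, zero_mul,
    zero_add]
  refine sum_congr rfl fun m _ => ?_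
  rw [twistedWeight, mul_add, eu_add]
  ring

lemma norm_twistedWeight (m : ℕ) : ‖twistedWeight N β m‖ = 2 * m / Real.sqrt N := by
  rw [twistedWeight, norm_mul, norm_eu, mul_one, Complex.norm_of_nonneg (by positivity)]

lemma norm_twistedWeight_le (hm : m ≤ Nat.sqrt N) : ‖twistedWeight N β m‖ ≤ 2 := by
  rw [norm_twistedWeight]
  refine div_le_of_le_mul₀ (Real.sqrt_nonneg _) zero_le_two ?_
  gcongr
  exact (Nat.cast_le.2 hm).trans Real.nat_sqrt_le_real_sqrt

lemma twistedWeight_succ_sub (m : ℕ) :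
    twistedWeight N β (m + 1) - twistedWeight N β m =
      ((2 / Real.sqrt N : ℝ) : ℂ) * eu (((m + 1 : ℕ) : ℝ) ^ 2 * β) +
        twistedWeight N β m * (eu ((2 * m + 1) * β) - 1) := by
  have phase : ((m + 1 : ℕ) : ℝ) ^ 2 * β = (m : ℝ) ^ 2 * β + (2 * m + 1) * β := by
    push_cast
    ring
  simp only [twistedWeight, phase, eu_add]
  push_cast
  ring

lemma norm_twistedWeight_succ_sub_le (hm : m < Nat.sqrt N) :
    ‖twistedWeight N β (m + 1) - twistedWeight N β m‖ ≤
      (2 + 8 * Real.pi * (|β| * N)) / Real.sqrt N := by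
  have hm' : (m : ℝ) + 1 ≤ Real.sqrt N :=
    le_trans (mod_cast Nat.succ_le_of_lt hm) Real.nat_sqrt_le_real_sqrt
  have hs : 0 < Real.sqrt N := lt_of_lt_of_le (by positivity) hm'
  have phase_step : ‖eu ((2 * m + 1) * β) - 1‖ ≤ 2 * Real.pi * (2 * Real.sqrt N * |β|) := by
    refine (norm_eu_sub_one_le _).trans ?_
    rw [abs_mul, abs_of_nonneg (by positivity : (0 : ℝ) ≤ 2 * m + 1)]
    gcongr
    linarith
  rw [twistedWeight_succ_sub, add_div]
  refine (norm_add_le _ _).trans (add_le_add ?_ ?_)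
  · rw [norm_mul, norm_eu, mul_one, Complex.norm_of_nonneg (by positivity)]
  · calc ‖twistedWeight N β m * (eu ((2 * m + 1) * β) - 1)‖
        ≤ 2 * (2 * Real.pi * (2 * Real.sqrt N * |β|)) := by
          rw [norm_mul]
          gcongr
          exact norm_twistedWeight_le β hm.le
      _ = 8 * Real.pi * (|β| * Real.sqrt N ^ 2) / Real.sqrt N := by field_simp; ring
      _ = 8 * Real.pi * (|β| * N) / Real.sqrt N := by rw [Real.sq_sqrt (Nat.cast_nonneg N)]

variable (N)

lemma sum_norm_twistedWeight_succ_sub_le :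
    ∑ m ∈ range (Nat.sqrt N), ‖twistedWeight N β (m + 1) - twistedWeight N β m‖ ≤
      2 + 8 * Real.pi * (|β| * N) := by
  have hV : 0 ≤ 2 + 8 * Real.pi * (|β| * N) := by positivity
  refine (sum_le_card_nsmul _ _ _ fun m hm =>
    norm_twistedWeight_succ_sub_le β (mem_range.1 hm)).trans ?_
  rw [card_range, nsmul_eq_mul, mul_div_left_comm]
  exact mul_le_of_le_one_right hV
    (div_le_one_of_le₀ Real.nat_sqrt_le_real_sqrt (Real.sqrt_nonneg _))

lemma norm_sum_twistedWeight_le :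
    ‖∑ m ∈ range (Nat.sqrt N + 1), twistedWeight N β m‖ ≤ 2 * Real.sqrt N := by
  rw [sum_range_succ', twistedWeight_zero, add_zero]
  calc ‖∑ m ∈ range (Nat.sqrt N), twistedWeight N β (m + 1)‖ ≤ #(range (Nat.sqrt N)) • (2 : ℝ) :=
        (norm_sum_le _ _).trans <| sum_le_card_nsmul _ _ _ fun m hm =>
          norm_twistedWeight_le β (Nat.succ_le_of_lt (mem_range.1 hm))
    _ = 2 * Nat.sqrt N := by rw [card_range, nsmul_eq_mul, mul_comm]
    _ ≤ 2 * Real.sqrt N := by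
        gcongr
        exact Real.nat_sqrt_le_real_sqrt

lemma norm_sum_twistedWeight_mul_le {f : ℕ → ℂ} {B : ℝ} (hf : ∀ n, ‖∑ m ∈ range n, f m‖ ≤ B) :
    ‖∑ m ∈ range (Nat.sqrt N + 1), twistedWeight N β m * f m‖ ≤
      (4 + 8 * Real.pi * (|β| * N)) * B := by
  have hB : 0 ≤ B := (norm_nonneg _).trans (hf 0)
  refine (norm_sum_range_succ_smul_le (twistedWeight N β) hf _).trans ?_
  refine mul_le_mul_of_nonneg_right ?_ hB
  linarith [norm_twistedWeight_le β (le_refl (Nat.sqrt N)), sum_norm_twistedWeight_succ_sub_le N β]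

end Weight

lemma eu_sq_mul_intCast_div {q : ℕ} [NeZero q] (a : ℤ) (m : ℕ) :
    eu ((m : ℝ) ^ 2 * (a / q)) = ZMod.stdAddChar ((a : ZMod q) * (m : ZMod q) ^ 2) := by
  have h := stdAddChar_intCast_eq_eu (q := q) (a * m ^ 2)
  push_cast at h
  rw [h, mul_div_left_comm, mul_div_assoc]

lemma hatW_intCast_div_add (N : ℕ) {q : ℕ} [NeZero q] (a : ℤ) (β : ℝ) :
    hatW N ((a : ℝ) / q + β) =
      (∑ m ∈ range (Nat.sqrt N + 1), twistedWeight N β m) * gaussMean (a : ZMod q) +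
        ∑ m ∈ range (Nat.sqrt N + 1), twistedWeight N β m *
          (ZMod.stdAddChar ((a : ZMod q) * (m : ZMod q) ^ 2) - gaussMean (a : ZMod q)) := by
  simp only [hatW_add, eu_sq_mul_intCast_div, mul_sub, sum_sub_distrib, sum_mul]
  ring

theorem statement_7_general (N : ℕ) {q : ℕ} (hq : q ≠ 0) {a : ℤ} (ha : IsCoprime a q) (β : ℝ) :
    ‖hatW N ((a : ℝ) / q + β)‖ ≤ 64 * Real.pi *
      (Real.sqrt N / Real.sqrt q + Real.sqrt ((q : ℝ) * Real.log q) * (1 + |β| * N)) := by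
  have : NeZero q := ⟨hq⟩
  have hunit : IsUnit (a : ZMod q) := (ZMod.coe_int_isUnit_iff_isCoprime a q).2 ha.symm
  have main : ‖(∑ m ∈ range (Nat.sqrt N + 1), twistedWeight N β m) * gaussMean (a : ZMod q)‖ ≤
      2 * Real.sqrt N * (2 / Real.sqrt q) := by
    rw [norm_mul]
    gcongr
    exacts [norm_sum_twistedWeight_le N β, norm_gaussMean_le hunit]
  have error := norm_sum_twistedWeight_mul_le N β
    (norm_sum_range_stdAddChar_mul_sq_sub_gaussMean_le hunit)
  rw [hatW_intCast_div_add]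
  calc _ ≤ 2 * Real.sqrt N * (2 / Real.sqrt q) +
          (4 + 8 * Real.pi * (|β| * N)) * (8 * Real.sqrt (q * Real.log q)) :=
        (norm_add_le _ _).trans (add_le_add main error)
    _ = 4 * (Real.sqrt N / Real.sqrt q) +
          Real.sqrt (q * Real.log q) * (32 * 1 + 64 * Real.pi * (|β| * N)) := by ring
    _ ≤ 64 * Real.pi * (Real.sqrt N / Real.sqrt q) +
          Real.sqrt (q * Real.log q) * (64 * Real.pi * 1 + 64 * Real.pi * (|β| * N)) := by
        gcongr <;> linarith [Real.pi_gt_three]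
    _ = _ := by ring

theorem statement_7 :
    ∃ C > (0 : ℝ), ∀ N : ℕ, 2 ≤ N → ∀ a q : ℕ, 1 ≤ a → a ≤ q → Nat.gcd a q = 1 →
      ∀ β : ℝ, ‖hatW N ((a : ℝ) / q + β)‖ ≤
        C * (Real.sqrt N / Real.sqrt q + Real.sqrt ((q : ℝ) * Real.log q) * (1 + |β| * N)) := by
  refine ⟨64 * Real.pi, by positivity, fun N _ a q ha haq hgcd β => ?_⟩
  simpa using statement_7_general N (by omega) (a := a) (Nat.isCoprime_iff_coprime.2 hgcd) β
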